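/- Optimal average-case local tester (Theorem theorem-424241): Let d, N ≥ 1 and let T be any matrix indexed by (Fin N → Fin d × Fin d) with 0 ⊑ T ⊑ 1 (Loewner order). Then there exists a matrix M indexed by (Fin N → Fin d) with 0 ⊑ M ⊑ 1 such that for EVERY Borel probability measure D on the unit sphere of (Fin d × Fin d) → ℂ that is unitarily invariant on H_B, one has ∫ tr(T * (ψψ†)^{⊗N}) dD(ψ) = ∫ tr(T̂ * (ψψ†)^{⊗N}) dD(ψ), where T̂ is the local tester T̂ x y = M (fun i => (x i).1) (fun i => (y i).1) * (if (fun i => (x i).2) = (fun i => (y i).2) then 1 else 0). -/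

import Mathlib

open scoped ComplexConjugate ComplexOrder Kronecker Matrix
open MeasureTheory

namespace PaperStmt

/-- The rank-one matrix `ψψ†` associated with a vector `ψ`. -/
noncomputable def outer {ι : Type*} (ψ : ι → ℂ) : Matrix ι ι ℂ :=
  Matrix.of fun x y => ψ x * conj (ψ y)

/-- The `N`-fold tensor power of a square matrix `ρ`. -/
noncomputable def tpow {ι : Type*} (ρ : Matrix ι ι ℂ) (N : ℕ) : Matrix (Fin N → ι) (Fin N → ι) ℂ :=
  Matrix.of fun x y => ∏ i, ρ (x i) (y i)

/-- `ψ` is a unit vector (for the ℓ² norm). -/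
def IsUnitVec {ι : Type*} [Fintype ι] (ψ : ι → ℂ) : Prop :=
  ∑ x, Complex.normSq (ψ x) = 1

/-- `0 ⊑ T ⊑ 1` in the Loewner order. -/
def IsTester {κ : Type*} [Fintype κ] [DecidableEq κ] (T : Matrix κ κ ℂ) : Prop :=
  T.PosSemidef ∧ ((1 : Matrix κ κ ℂ) - T).PosSemidef

/-- `ρ` is a density matrix: positive semidefinite with unit trace. -/
def IsDensity {ι : Type*} [Fintype ι] (ρ : Matrix ι ι ℂ) : Prop :=
  ρ.PosSemidef ∧ ρ.trace = 1

/-- The acceptance probability `tr (T · ρ^{⊗N})` of a tester `T` on `N` samples of `ρ`. -/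
noncomputable def acc {ι : Type*} [Fintype ι] {N : ℕ}
    (T : Matrix (Fin N → ι) (Fin N → ι) ℂ) (ρ : Matrix ι ι ℂ) : ℝ :=
  ((T * tpow ρ N).trace).re

/-- The trace distance `½ ∑ᵢ |λᵢ(ρ - σ)|` between (Hermitian) matrices. -/
noncomputable def traceDist {κ : Type*} [Fintype κ] [DecidableEq κ]
    (ρ σ : Matrix κ κ ℂ) : ℝ :=
  if h : (ρ - σ).IsHermitian then (1 / 2) * ∑ i, |h.eigenvalues i| else 0

/-- The local tester on `H_A` determined by a matrix `M` acting on Alice's registers. -/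
noncomputable def localA {d N : ℕ} (M : Matrix (Fin N → Fin d) (Fin N → Fin d) ℂ) :
    Matrix (Fin N → Fin d × Fin d) (Fin N → Fin d × Fin d) ℂ :=
  Matrix.of fun x y =>
    M (fun i => (x i).1) (fun i => (y i).1) *
      (if (fun i => (x i).2) = (fun i => (y i).2) then 1 else 0)

/-- The vector `(I ⊗ U) ψ` : the unitary `U` applied to the `B` part of `ψ`. -/
noncomputable def applyB {d : ℕ} (U : Matrix (Fin d) (Fin d) ℂ) (ψ : Fin d × Fin d → ℂ) :
    Fin d × Fin d → ℂ :=
  fun p => ∑ k, U p.2 k * ψ (p.1, k)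

/-- The partial trace over the second (`B`) tensor factor. -/
noncomputable def ptraceB {d : ℕ} (M : Matrix (Fin d × Fin d) (Fin d × Fin d) ℂ) :
    Matrix (Fin d) (Fin d) ℂ :=
  Matrix.of fun a b => ∑ j, M (a, j) (b, j)

/-!
Write a bipartite vector as `ψ = vec A`, so that `(I ⊗ U) ψ = vec (U A)` and `ψ^{⊗N}` becomes
`vec (A^{⊗N})` after regrouping the registers. Averaging over `U(d)` with Haar measure, it is enough
to find a tester `M` with `tr((M ⊗ 1) vec X vec X†) = ∫ tr(T vec(U^{⊗N} X) vec(U^{⊗N} X)†) dU`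
for `X = A^{⊗N}`. The right-hand side is `tr(T (Xᵀ ⊗ 1) J (Xᵀ ⊗ 1)†)` with
`J = ∫ vec(U^{⊗N}) vec(U^{⊗N})† dU`. By invariance of Haar measure, `J` commutes with `Vᵀ ⊗ 1` for
every `V = U^{⊗N}`, hence for every `V` in their span. That span contains all `A^{⊗N}`, because a
polynomial vanishing on `U(d)` vanishes on all matrices. So `√J` commutes with `Xᵀ ⊗ 1` and
`M = tr₂(√J T √J)` works; it is at most `1` because `tr₂ J = 1`.
-/

section Outer

variable {ι κ : Type*}

lemma outer_eq_vecMulVec (ψ : ι → ℂ) : outer ψ = Matrix.vecMulVec ψ (star ψ) := rfl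

lemma continuous_outer : Continuous (outer : (ι → ℂ) → Matrix ι ι ℂ) :=
  continuous_id.matrix_vecMulVec continuous_star

lemma outer_mulVec [Fintype κ] (L : Matrix ι κ ℂ) (ψ : κ → ℂ) :
    outer (L *ᵥ ψ) = L * outer ψ * Lᴴ := by
  rw [outer_eq_vecMulVec, outer_eq_vecMulVec, Matrix.mul_vecMulVec, Matrix.vecMulVec_mul,
    Matrix.star_mulVec]

lemma outer_vec_mul {n : Type*} [Fintype ι] [DecidableEq ι] [Fintype κ] (A : Matrix ι κ ℂ)
    (B : Matrix κ n ℂ) :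
    outer (A * B).vec =
      (Bᵀ ⊗ₖ (1 : Matrix ι ι ℂ)) * outer A.vec * (Bᵀ ⊗ₖ (1 : Matrix ι ι ℂ))ᴴ := by
  rw [← outer_mulVec, Matrix.kronecker_mulVec_vec, Matrix.one_mul, Matrix.transpose_transpose]

end Outer

section TraceRight

variable {m n R : Type*} [Fintype n]

/-- The partial trace over the second tensor factor, as a linear map. -/
def traceRight (m n R : Type*) [Fintype n] [Semiring R] :
    Matrix (m × n) (m × n) R →ₗ[R] Matrix m m R where
  toFun X := ∑ b, X.submatrix (·, b) (·, b)
  map_add' X Y := Finset.sum_add_distrib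
  map_smul' c X := by
    simp only [Matrix.submatrix_smul, Pi.smul_apply, Finset.smul_sum, RingHom.id_apply]

lemma traceRight_apply [Semiring R] (X : Matrix (m × n) (m × n) R) (a a' : m) :
    traceRight m n R X a a' = ∑ b, X (a, b) (a', b) :=
  Matrix.sum_apply a a' _ _

lemma posSemidef_traceRight {X : Matrix (m × n) (m × n) ℂ} (hX : X.PosSemidef) :
    (traceRight m n ℂ X).PosSemidef :=
  Matrix.posSemidef_sum _ fun _ _ => hX.submatrix _

lemma trace_traceRight_mul [Fintype m] [DecidableEq n] [Semiring R] (X : Matrix (m × n) (m × n) R)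
    (Y : Matrix m m R) :
    (traceRight m n R X * Y).trace = (X * (Y ⊗ₖ (1 : Matrix n n R))).trace := by
  simp only [Matrix.trace, Matrix.diag_apply, Matrix.mul_apply, traceRight_apply,
    Fintype.sum_prod_type, Matrix.kroneckerMap_apply, Matrix.one_apply, mul_ite, mul_one, mul_zero,
    Finset.sum_ite_eq', Finset.mem_univ, if_true, Finset.sum_mul]
  exact Finset.sum_congr rfl fun a _ => Finset.sum_comm

lemma traceRight_outer_vec (A : Matrix n m ℂ) :
    traceRight m n ℂ (outer A.vec) = Aᵀ * Aᵀᴴ := by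
  ext a a'
  simp [traceRight_apply, outer, Matrix.vec, Matrix.mul_apply]

lemma trace_kronecker_one_mul_outer_vec [Fintype m] [DecidableEq n] (M : Matrix m m ℂ)
    (A : Matrix n m ℂ) :
    ((M ⊗ₖ (1 : Matrix n n ℂ)) * outer A.vec).trace = (M * (Aᵀ * Aᵀᴴ)).trace := by
  rw [Matrix.trace_mul_comm, ← trace_traceRight_mul, traceRight_outer_vec, Matrix.trace_mul_comm]

end TraceRight

section Twirl

open scoped Matrix.Norms.L2Operator MatrixOrder

variable {G κ : Type*} [Group G] [MeasurableSpace G] [Fintype κ] [DecidableEq κ]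

/-- The Choi matrix of the twirling channel `ρ ↦ ∫ π(g) ρ π(g)† dμ(g)`; the first tensor factor is
the input of the channel and the second one its output. -/
noncomputable def twirlChoi (μ : Measure G) (π : G →* Matrix.unitaryGroup κ ℂ) :
    Matrix (κ × κ) (κ × κ) ℂ :=
  ∫ g, outer (π g : Matrix κ κ ℂ).vec ∂μ

/-- The tester `tr₂(√J T √J)` on the first tensor factor, where `J` is the Choi matrix of the
twirling channel; it accepts a vector `X` in the span of `π` as often as `T` accepts the random
vector `π(g) X`. The symmetric form with `√J` makes its positivity evident. -/
noncomputable def twirlTester (μ : Measure G) (π : G →* Matrix.unitaryGroup κ ℂ)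
    (T : Matrix (κ × κ) (κ × κ) ℂ) : Matrix κ κ ℂ :=
  traceRight κ κ ℂ (CFC.sqrt (twirlChoi μ π) * T * CFC.sqrt (twirlChoi μ π))

lemma twirlChoi_nonneg (μ : Measure G) (π : G →* Matrix.unitaryGroup κ ℂ) :
    0 ≤ twirlChoi μ π :=
  integral_nonneg fun _ => (Matrix.posSemidef_vecMulVec_self_star _).nonneg

lemma posSemidef_twirlTester (μ : Measure G) (π : G →* Matrix.unitaryGroup κ ℂ)
    {T : Matrix (κ × κ) (κ × κ) ℂ} (hT : T.PosSemidef) : (twirlTester μ π T).PosSemidef := by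
  apply posSemidef_traceRight
  rw [← Matrix.nonneg_iff_posSemidef] at hT ⊢
  exact conjugate_nonneg_of_nonneg hT (CFC.sqrt_nonneg _)

variable [TopologicalSpace G] [CompactSpace G] [BorelSpace G] {μ : Measure G}
  {π : G →* Matrix.unitaryGroup κ ℂ}

lemma integrable_outer_vec [IsFiniteMeasure μ] (hπ : Continuous π) (X : Matrix κ κ ℂ) :
    Integrable (fun g => outer ((π g : Matrix κ κ ℂ) * X).vec) μ := by
  have hcont : Continuous fun g => ((π g : Matrix κ κ ℂ) * X).vec :=
    continuous_pi fun x =>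
      ((continuous_subtype_val.comp hπ).matrix_mul continuous_const).matrix_elem x.2 x.1
  exact (continuous_outer.comp hcont).integrable_of_hasCompactSupport (.of_compactSpace _)

lemma integrable_trace_mul_outer_vec [IsFiniteMeasure μ] (hπ : Continuous π)
    (T : Matrix (κ × κ) (κ × κ) ℂ) (X : Matrix κ κ ℂ) :
    Integrable (fun g => (T * outer ((π g : Matrix κ κ ℂ) * X).vec).trace) μ :=
  (Matrix.traceLinearMap (κ × κ) ℂ ℂ ∘ₗ LinearMap.mulLeft ℂ T).toContinuousLinearMap
    |>.integrable_comp (integrable_outer_vec hπ X)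

lemma kronecker_one_mul_twirlChoi_mul [IsFiniteMeasure μ] (hπ : Continuous π) (X : Matrix κ κ ℂ) :
    (Xᵀ ⊗ₖ 1) * twirlChoi μ π * (Xᵀ ⊗ₖ (1 : Matrix κ κ ℂ))ᴴ =
      ∫ g, outer ((π g : Matrix κ κ ℂ) * X).vec ∂μ := by
  have hint : Integrable (fun g => outer (π g : Matrix κ κ ℂ).vec) μ := by
    simpa only [Matrix.mul_one] using integrable_outer_vec hπ 1
  simp_rw [outer_vec_mul]
  rw [integral_mul_const_of_integrable (hint.const_mul _), integral_const_mul_of_integrable hint,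
    twirlChoi]

lemma traceRight_twirlChoi [IsProbabilityMeasure μ] (hπ : Continuous π) :
    traceRight κ κ ℂ (twirlChoi μ π) = 1 := by
  have hint : Integrable (fun g => outer (π g : Matrix κ κ ℂ).vec) μ := by
    simpa only [Matrix.mul_one] using integrable_outer_vec hπ 1
  have htrace (g : G) : traceRight κ κ ℂ (outer (π g : Matrix κ κ ℂ).vec) = 1 := by
    rw [traceRight_outer_vec]
    exact Matrix.mem_unitaryGroup_iff.mp (Matrix.transpose_mem_unitaryGroup_iff.mpr (π g).2)
  calc traceRight κ κ ℂ (twirlChoi μ π)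
      = ∫ g, traceRight κ κ ℂ (outer (π g : Matrix κ κ ℂ).vec) ∂μ :=
        ((traceRight κ κ ℂ).toContinuousLinearMap.integral_comp_comm hint).symm
    _ = 1 := by simp [htrace]

lemma isTester_twirlTester [IsProbabilityMeasure μ] (hπ : Continuous π)
    {T : Matrix (κ × κ) (κ × κ) ℂ} (hT : IsTester T) : IsTester (twirlTester μ π T) := by
  have hone : twirlTester μ π 1 = 1 := by
    rw [twirlTester, Matrix.mul_one, CFC.sqrt_mul_sqrt_self _ (twirlChoi_nonneg μ π),
      traceRight_twirlChoi hπ]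
  have hsub : 1 - twirlTester μ π T = twirlTester μ π (1 - T) := by
    rw [← hone]
    simp only [twirlTester, Matrix.mul_sub, Matrix.sub_mul, map_sub]
  exact ⟨posSemidef_twirlTester μ π hT.1, hsub ▸ posSemidef_twirlTester μ π hT.2⟩

variable [IsTopologicalGroup G] [IsFiniteMeasure μ] [μ.IsMulRightInvariant]

lemma commute_kronecker_one_twirlChoi_of_range (hπ : Continuous π) (h : G) :
    Commute ((π h : Matrix κ κ ℂ)ᵀ ⊗ₖ 1) (twirlChoi μ π) := by
  set L := (π h : Matrix κ κ ℂ)ᵀ ⊗ₖ (1 : Matrix κ κ ℂ) with hL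
  have hLL : Lᴴ * L = 1 := by
    rw [hL, Matrix.conjTranspose_kronecker, ← Matrix.mul_kronecker_mul, Matrix.conjTranspose_one,
      Matrix.mul_one, ← Matrix.one_kronecker_one]
    congr 1
    exact Matrix.mem_unitaryGroup_iff'.mp (Matrix.transpose_mem_unitaryGroup_iff.mpr (π h).2)
  have hconj : L * twirlChoi μ π * Lᴴ = twirlChoi μ π := by
    rw [hL, kronecker_one_mul_twirlChoi_mul hπ]
    simpa only [map_mul, Submonoid.coe_mul, twirlChoi] using integral_mul_right_eq_self (μ := μ)
      (fun g => outer (π g : Matrix κ κ ℂ).vec) h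
  calc L * twirlChoi μ π = L * twirlChoi μ π * (Lᴴ * L) := by rw [hLL, Matrix.mul_one]
    _ = twirlChoi μ π * L := by rw [← Matrix.mul_assoc, hconj]

lemma commute_kronecker_one_twirlChoi (hπ : Continuous π) {X : Matrix κ κ ℂ}
    (hX : X ∈ Submodule.span ℂ (Set.range fun g => (π g : Matrix κ κ ℂ))) :
    Commute (Xᵀ ⊗ₖ 1) (twirlChoi μ π) := by
  induction hX using Submodule.span_induction with
  | mem _ hX =>
    obtain ⟨g, rfl⟩ := hX
    exact commute_kronecker_one_twirlChoi_of_range hπ g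
  | zero => simp
  | add X Y _ _ hX hY =>
    rw [Matrix.transpose_add, Matrix.add_kronecker]
    exact hX.add_left hY
  | smul c X _ hX =>
    rw [Matrix.transpose_smul, Matrix.smul_kronecker]
    exact hX.smul_left c

lemma trace_twirlTester_kronecker_one_mul_outer_vec (hπ : Continuous π)
    (T : Matrix (κ × κ) (κ × κ) ℂ) {X : Matrix κ κ ℂ}
    (hX : X ∈ Submodule.span ℂ (Set.range fun g => (π g : Matrix κ κ ℂ))) :
    ((twirlTester μ π T ⊗ₖ 1) * outer X.vec).trace =
      ∫ g, (T * outer ((π g : Matrix κ κ ℂ) * X).vec).trace ∂μ := by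
  -- `√J` commutes with `Xᵀ ⊗ 1`, hence the two halves of `J` can be brought together around it.
  set L := Xᵀ ⊗ₖ (1 : Matrix κ κ ℂ) with hL
  set S := CFC.sqrt (twirlChoi μ π)
  have hSS : S * S = twirlChoi μ π := CFC.sqrt_mul_sqrt_self _ (twirlChoi_nonneg μ π)
  have hLS : L * S = S * L :=
    (Commute.cfcₙ_nnreal (commute_kronecker_one_twirlChoi hπ hX).symm _).symm
  have hSL : Lᴴ * S = S * Lᴴ := by
    have hSstar : Sᴴ = S := (CFC.sqrt_nonneg (twirlChoi μ π)).isSelfAdjoint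
    simpa only [Matrix.conjTranspose_mul, hSstar] using (congrArg Matrix.conjTranspose hLS).symm
  have hLL : (Xᵀ * Xᵀᴴ) ⊗ₖ (1 : Matrix κ κ ℂ) = L * Lᴴ := by
    rw [hL, Matrix.conjTranspose_kronecker, ← Matrix.mul_kronecker_mul, Matrix.conjTranspose_one,
      Matrix.mul_one]
  calc ((twirlTester μ π T ⊗ₖ 1) * outer X.vec).trace
      = (S * T * S * (L * Lᴴ)).trace := by
        rw [trace_kronecker_one_mul_outer_vec, twirlTester, trace_traceRight_mul, hLL]
    _ = (T * (S * L * (Lᴴ * S))).trace := by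
        rw [Matrix.mul_assoc S, Matrix.mul_assoc S, Matrix.trace_mul_comm]
        simp only [Matrix.mul_assoc]
    _ = (T * (L * twirlChoi μ π * Lᴴ)).trace := by
        rw [← hLS, hSL, ← hSS]
        simp only [Matrix.mul_assoc]
    _ = (T * ∫ g, outer ((π g : Matrix κ κ ℂ) * X).vec ∂μ).trace := by
        rw [kronecker_one_mul_twirlChoi_mul hπ]
    _ = ∫ g, (T * outer ((π g : Matrix κ κ ℂ) * X).vec).trace ∂μ :=
        ((Matrix.traceLinearMap (κ × κ) ℂ ℂ ∘ₗ LinearMap.mulLeft ℂ T).toContinuousLinearMap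
          |>.integral_comp_comm (integrable_outer_vec hπ X)).symm

end Twirl

section UnitaryGroup

variable {n : Type*} [Fintype n] [DecidableEq n]

instance compactSpace_unitaryGroup : CompactSpace (Matrix.unitaryGroup n ℂ) := by
  have hball : IsCompact (Set.univ.pi fun _ : n => Set.univ.pi fun _ : n =>
      Metric.closedBall (0 : ℂ) 1) :=
    isCompact_univ_pi fun _ => isCompact_univ_pi fun _ => isCompact_closedBall _ _
  have hclosed : IsClosed (Matrix.unitaryGroup n ℂ : Set (Matrix n n ℂ)) := isClosed_unitary
  exact isCompact_iff_compactSpace.mp (hball.of_isClosed_subset hclosed fun U hU i _ j _ =>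
    mem_closedBall_zero_iff.mpr (entry_norm_bound_of_unitary hU i j))

lemma infinite_unitSphere : (Metric.sphere (0 : ℂ) 1).Infinite := by
  refine (isPreconnected_sphere ?_ 0 1).infinite_of_nontrivial ⟨1, by simp, -1, by simp, ?_⟩
  · simp [Complex.rank_real_complex]
  · norm_num

lemma diagonal_mem_unitaryGroup {s : n → ℂ} (hs : ∀ i, s i ∈ Metric.sphere 0 1) :
    Matrix.diagonal s ∈ Matrix.unitaryGroup n ℂ := by
  rw [Matrix.mem_unitaryGroup_iff, Matrix.star_eq_conjTranspose, Matrix.diagonal_conjTranspose,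
    Matrix.diagonal_mul_diagonal, Matrix.diagonal_eq_one]
  ext i
  have hi : ‖s i‖ = 1 := by simpa using hs i
  simp [Complex.mul_conj, Complex.normSq_eq_norm_sq, hi]

lemma eval_vec_eq_zero_of_isHermitian {p : MvPolynomial (n × n) ℂ}
    (hp : ∀ U ∈ Matrix.unitaryGroup n ℂ, p.eval U.vec = 0) {A : Matrix n n ℂ}
    (hA : A.IsHermitian) : p.eval A.vec = 0 := by
  let W := hA.eigenvectorUnitary
  -- `q(s) = p(W diag(s) W†)` vanishes on the torus `|sᵢ| = 1`, hence identically.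
  let q : MvPolynomial n ℂ := MvPolynomial.bind₁ (fun x =>
    ∑ k, MvPolynomial.C ((W : Matrix n n ℂ) x.2 k * star ((W : Matrix n n ℂ) x.1 k)) *
      MvPolynomial.X k) p
  have hq (s : n → ℂ) : q.eval s = p.eval
      ((W : Matrix n n ℂ) * Matrix.diagonal s * star (W : Matrix n n ℂ)).vec := by
    rw [← MvPolynomial.coe_aeval_eq_eval, ← MvPolynomial.coe_aeval_eq_eval,
      RingHom.coe_coe, RingHom.coe_coe, MvPolynomial.aeval_bind₁]
    congr! 2
    ext x
    simp [Matrix.vec, Matrix.mul_apply, Matrix.diagonal_apply, mul_right_comm]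
  have hq_zero : q = 0 := by
    refine MvPolynomial.funext_set (fun _ => Metric.sphere 0 1) (fun _ => infinite_unitSphere)
      fun s hs => ?_
    rw [hq, map_zero]
    exact hp _ (mul_mem (mul_mem W.2 (diagonal_mem_unitaryGroup fun i => hs i trivial))
      (Unitary.star_mem W.2))
  have hspec := hA.spectral_theorem
  rw [Unitary.conjStarAlgAut_apply] at hspec
  rw [hspec, ← hq, hq_zero, map_zero]

lemma eq_zero_of_eval_vec_unitaryGroup_eq_zero {p : MvPolynomial (n × n) ℂ}
    (hp : ∀ U ∈ Matrix.unitaryGroup n ℂ, p.eval U.vec = 0) : p = 0 := by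
  refine MvPolynomial.funext fun v => ?_
  obtain ⟨A, rfl⟩ := Matrix.vec_bijective.surjective v
  -- `q(z) = p(Re A + z Im A)` vanishes at real `z` and equals `p(A)` at `z = i`.
  let q : Polynomial ℂ := MvPolynomial.aeval (fun x =>
    Polynomial.C ((realPart A : Matrix n n ℂ).vec x) +
      Polynomial.C ((imaginaryPart A : Matrix n n ℂ).vec x) * Polynomial.X) p
  have hq (z : ℂ) : q.eval z =
      p.eval ((realPart A : Matrix n n ℂ) + z • (imaginaryPart A : Matrix n n ℂ)).vec := by
    rw [← Polynomial.coe_aeval_eq_eval, ← MvPolynomial.coe_aeval_eq_eval, RingHom.coe_coe,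
      ← AlgHom.comp_apply, MvPolynomial.comp_aeval]
    congr! 2
    ext x
    simp [Matrix.vec, mul_comm z]
  have hq_zero : q = 0 := by
    refine Polynomial.eq_zero_of_infinite_isRoot q
      ((Set.infinite_range_of_injective Complex.ofReal_injective).mono ?_)
    rintro _ ⟨t, rfl⟩
    refine (hq t).trans (eval_vec_eq_zero_of_isHermitian hp ?_)
    exact (realPart A).2.add (IsSelfAdjoint.smul (Complex.conj_ofReal t) (imaginaryPart A).2)
  rw [map_zero, ← realPart_add_I_smul_imaginaryPart A, ← hq, hq_zero, Polynomial.eval_zero]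

end UnitaryGroup

section TensorPower

variable {ι : Type*} {N : ℕ}

lemma tpow_conjTranspose (A : Matrix ι ι ℂ) : tpow Aᴴ N = (tpow A N)ᴴ := by
  ext x y
  simp [tpow, Matrix.conjTranspose_apply]

lemma tpow_one [DecidableEq ι] : tpow (1 : Matrix ι ι ℂ) N = 1 := by
  ext x y
  simp only [tpow, Matrix.of_apply, Matrix.one_apply, Fintype.prod_ite_zero, funext_iff,
    Finset.prod_const_one]

lemma continuous_tpow : Continuous fun A : Matrix ι ι ℂ => tpow A N :=
  continuous_matrix fun x y =>
    continuous_finsetProd Finset.univ fun i _ => continuous_id.matrix_elem (x i) (y i)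

variable [Fintype ι]

lemma tpow_mul (A B : Matrix ι ι ℂ) : tpow (A * B) N = tpow A N * tpow B N := by
  ext x y
  simp only [tpow, Matrix.of_apply, Matrix.mul_apply, ← Finset.prod_mul_distrib]
  rw [Finset.prod_univ_sum, Fintype.piFinset_univ]

variable [DecidableEq ι]

lemma tpow_mem_unitaryGroup {U : Matrix ι ι ℂ} (hU : U ∈ Matrix.unitaryGroup ι ℂ) :
    tpow U N ∈ Matrix.unitaryGroup (Fin N → ι) ℂ := by
  rw [Matrix.mem_unitaryGroup_iff, Matrix.star_eq_conjTranspose] at *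
  rw [← tpow_conjTranspose, ← tpow_mul, hU, tpow_one]

/-- The `N`-fold tensor power of the defining representation of the unitary group. -/
noncomputable def tpowUnitary (ι : Type*) [Fintype ι] [DecidableEq ι] (N : ℕ) :
    Matrix.unitaryGroup ι ℂ →* Matrix.unitaryGroup (Fin N → ι) ℂ where
  toFun U := ⟨tpow U N, tpow_mem_unitaryGroup U.2⟩
  map_one' := Subtype.ext tpow_one
  map_mul' U V := Subtype.ext (tpow_mul (U : Matrix ι ι ℂ) V)

lemma coe_tpowUnitary (U : Matrix.unitaryGroup ι ℂ) :
    (tpowUnitary ι N U : Matrix (Fin N → ι) (Fin N → ι) ℂ) = tpow U N := rfl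

lemma continuous_tpowUnitary : Continuous (tpowUnitary ι N) :=
  (continuous_tpow.comp continuous_subtype_val).subtype_mk _

lemma tpow_mem_span_tpowUnitary (A : Matrix ι ι ℂ) : tpow A N ∈ Submodule.span ℂ
    (Set.range fun U => (tpowUnitary ι N U : Matrix (Fin N → ι) (Fin N → ι) ℂ)) := by
  by_contra hA
  obtain ⟨f, hfA, hf⟩ := Submodule.exists_le_ker_of_notMem hA
  let p : MvPolynomial (ι × ι) ℂ :=
    ∑ x, ∑ y, MvPolynomial.C (f (Matrix.single x y 1)) * ∏ i, MvPolynomial.X (y i, x i)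
  have hp (B : Matrix ι ι ℂ) : p.eval B.vec = f (tpow B N) := by
    have hsingle (x y : Fin N → ι) (c : ℂ) :
        f (Matrix.single x y c) = f (Matrix.single x y 1) * c := by
      rw [mul_comm, ← smul_eq_mul, ← map_smul, Matrix.smul_single, smul_eq_mul, mul_one]
    conv_rhs => rw [Matrix.matrix_eq_sum_single (tpow B N)]
    simp only [p, map_sum, map_mul, map_prod, MvPolynomial.eval_C, MvPolynomial.eval_X,
      hsingle _ _ (tpow B N _ _)]
    rfl
  have hp_zero : p = 0 := eq_zero_of_eval_vec_unitaryGroup_eq_zero fun U hU =>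
    (hp U).trans (hf (Submodule.subset_span ⟨⟨U, hU⟩, rfl⟩))
  exact hfA (by rw [← hp, hp_zero, map_zero])

end TensorPower

section Regroup

variable {m : Type*} {N : ℕ}

/-- The identification `(A ⊗ B)^{⊗N} ≃ A^{⊗N} ⊗ B^{⊗N}` at the level of basis indices. -/
def regroup (m n : Type*) (N : ℕ) : (Fin N → m × n) ≃ (Fin N → m) × (Fin N → n) :=
  Equiv.arrowProdEquivProdArrow (Fin N) (fun _ => m) (fun _ => n)

lemma tpow_outer_vec (A : Matrix m m ℂ) :
    tpow (outer A.vec) N =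
      (outer (tpow A N).vec).submatrix (regroup m m N) (regroup m m N) := by
  ext x y
  simp [tpow, outer, regroup, Matrix.vec, Finset.prod_mul_distrib, Equiv.arrowProdEquivProdArrow]

lemma acc_outer_vec [Fintype m] (T : Matrix (Fin N → m × m) (Fin N → m × m) ℂ)
    (A : Matrix m m ℂ) :
    acc T (outer A.vec) = (T.submatrix (regroup m m N).symm (regroup m m N).symm *
      outer (tpow A N).vec).trace.re := by
  simp only [acc, tpow_outer_vec, Matrix.trace, Matrix.diag_apply, Matrix.mul_apply]
  congr 1
  refine Fintype.sum_equiv (regroup m m N) _ _ fun x =>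
    Fintype.sum_equiv (regroup m m N) _ _ fun y => ?_
  simp

lemma isTester_submatrix_equiv {α β : Type*} [Fintype α] [DecidableEq α] [Fintype β]
    [DecidableEq β] {T : Matrix α α ℂ} (hT : IsTester T) (e : β ≃ α) :
    IsTester (T.submatrix e e) := by
  refine ⟨hT.1.submatrix e, ?_⟩
  rw [← Matrix.submatrix_one_equiv e]
  exact hT.2.submatrix e

lemma localA_submatrix_regroup {d : ℕ} (M : Matrix (Fin N → Fin d) (Fin N → Fin d) ℂ) :
    (localA M).submatrix (regroup (Fin d) (Fin d) N).symm (regroup (Fin d) (Fin d) N).symm =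
      M ⊗ₖ 1 := by
  ext x y
  simp [localA, regroup, Matrix.one_apply, Equiv.arrowProdEquivProdArrow]

lemma applyB_vec {d : ℕ} (U A : Matrix (Fin d) (Fin d) ℂ) : applyB U A.vec = (U * A).vec := by
  ext x
  simp [applyB, Matrix.vec, Matrix.mul_apply]

end Regroup

section Measure

lemma exists_isProbabilityMeasure_isMulRightInvariant (G : Type*) [Group G] [TopologicalSpace G]
    [IsTopologicalGroup G] [CompactSpace G] [MeasurableSpace G] [BorelSpace G] :
    ∃ μ : Measure G, IsProbabilityMeasure μ ∧ μ.IsMulRightInvariant := by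
  let μ : Measure G := Measure.haarMeasure ⊤
  have : IsProbabilityMeasure μ := ⟨Measure.haarMeasure_self⟩
  exact ⟨μ.inv, Measure.isProbabilityMeasure_map (by fun_prop), inferInstance⟩

variable {G X E : Type*} [MeasurableSpace G] [MeasurableSpace X] [NormedAddCommGroup E]
  [NormedSpace ℝ E]

lemma integral_integral_comp_eq_of_map_eq {μ : Measure G} [IsProbabilityMeasure μ]
    {D : Measure X} [SFinite D] {F : G → X → X} (hF : Measurable (Function.uncurry F))
    (hD : ∀ g, D.map (F g) = D) {f : X → E} (hf : Integrable f D) :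
    ∫ x, ∫ g, f (F g x) ∂μ ∂D = ∫ x, f x ∂D := by
  have hskew : MeasurePreserving (fun p : G × X => F p.1 p.2) (μ.prod D) D :=
    measurePreserving_snd.comp ((MeasurePreserving.id μ).skew_product hF (.of_forall hD))
  calc ∫ x, ∫ g, f (F g x) ∂μ ∂D = ∫ p, f (F p.1 p.2) ∂μ.prod D :=
        (integral_prod_symm _ (hskew.integrable_comp_of_integrable hf)).symm
    _ = ∫ x, f x ∂(μ.prod D).map fun p => F p.1 p.2 :=
        (integral_map hskew.aemeasurable (hskew.map_eq.symm ▸ hf.1)).symm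
    _ = ∫ x, f x ∂D := by rw [hskew.map_eq]

lemma norm_le_one_of_isUnitVec {ι : Type*} [Fintype ι] {ψ : ι → ℂ} (hψ : IsUnitVec ψ) :
    ‖ψ‖ ≤ 1 := by
  refine (pi_norm_le_iff_of_nonneg zero_le_one).mpr fun x => ?_
  rw [← sq_le_one_iff₀ (norm_nonneg _), ← Complex.normSq_eq_norm_sq, ← hψ]
  exact Finset.single_le_sum (fun y _ => Complex.normSq_nonneg (ψ y)) (Finset.mem_univ x)

lemma integrable_of_ae_isUnitVec {ι E : Type*} [Fintype ι] [NormedAddCommGroup E]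
    {D : Measure (ι → ℂ)} [IsFiniteMeasure D] (hD : ∀ᵐ ψ ∂D, IsUnitVec ψ) {f : (ι → ℂ) → E}
    (hf : Continuous f) : Integrable f D := by
  have hball : ∀ᵐ ψ ∂D, ψ ∈ Metric.closedBall 0 1 :=
    hD.mono fun _ hψ => mem_closedBall_zero_iff.mpr (norm_le_one_of_isUnitVec hψ)
  rw [← Measure.restrict_eq_self_of_ae_mem hball]
  exact hf.continuousOn.integrableOn_compact (isCompact_closedBall _ _)

end Measure

section LocalTester

variable {d N : ℕ}

lemma exists_isTester_integral_acc_applyB_eq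
    [MeasurableSpace (Matrix.unitaryGroup (Fin d) ℂ)] [BorelSpace (Matrix.unitaryGroup (Fin d) ℂ)]
    (μ : Measure (Matrix.unitaryGroup (Fin d) ℂ)) [IsProbabilityMeasure μ] [μ.IsMulRightInvariant]
    {T : Matrix (Fin N → Fin d × Fin d) (Fin N → Fin d × Fin d) ℂ} (hT : IsTester T) :
    ∃ M : Matrix (Fin N → Fin d) (Fin N → Fin d) ℂ, IsTester M ∧ ∀ ψ : Fin d × Fin d → ℂ,
      ∫ U, acc T (outer (applyB U ψ)) ∂μ = acc (localA M) (outer ψ) := by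
  let T' := T.submatrix (regroup (Fin d) (Fin d) N).symm (regroup (Fin d) (Fin d) N).symm
  refine ⟨twirlTester μ (tpowUnitary (Fin d) N) T', isTester_twirlTester continuous_tpowUnitary
    (isTester_submatrix_equiv hT _), fun ψ => ?_⟩
  obtain ⟨A, rfl⟩ := Matrix.vec_bijective.surjective ψ
  rw [acc_outer_vec, localA_submatrix_regroup, trace_twirlTester_kronecker_one_mul_outer_vec
    continuous_tpowUnitary T' (tpow_mem_span_tpowUnitary A)]
  simp_rw [applyB_vec, acc_outer_vec, tpow_mul, coe_tpowUnitary]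
  exact integral_re (𝕜 := ℂ)
    (integrable_trace_mul_outer_vec continuous_tpowUnitary T' (tpow A N))

lemma continuous_acc_outer {ι : Type*} [Fintype ι]
    (T : Matrix (Fin N → ι) (Fin N → ι) ℂ) : Continuous fun ψ => acc T (outer ψ) :=
  Complex.continuous_re.comp
    (continuous_const.matrix_mul (continuous_tpow.comp continuous_outer)).matrix_trace

lemma continuous_uncurry_applyB :
    Continuous (Function.uncurry (applyB : Matrix (Fin d) (Fin d) ℂ → _)) := by
  unfold Function.uncurry applyB
  fun_prop

end LocalTester

theorem stmt_3_general {d N : ℕ} {T : Matrix (Fin N → Fin d × Fin d) (Fin N → Fin d × Fin d) ℂ}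
    (hT : IsTester T) :
    ∃ M : Matrix (Fin N → Fin d) (Fin N → Fin d) ℂ,
      IsTester M ∧
      ∀ D : Measure (Fin d × Fin d → ℂ), SFinite D →
        Integrable (fun ψ => acc T (outer ψ)) D →
        (∀ U ∈ Matrix.unitaryGroup (Fin d) ℂ, D.map (applyB U) = D) →
        ∫ ψ, acc T (outer ψ) ∂D = ∫ ψ, acc (localA M) (outer ψ) ∂D := by
  borelize ↥(Matrix.unitaryGroup (Fin d) ℂ)
  obtain ⟨μ, _, _⟩ :=
    exists_isProbabilityMeasure_isMulRightInvariant (Matrix.unitaryGroup (Fin d) ℂ)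
  obtain ⟨M, hM, hMT⟩ := exists_isTester_integral_acc_applyB_eq μ hT
  refine ⟨M, hM, fun D _ hint hD => ?_⟩
  have hmeas : Measurable (Function.uncurry fun U : Matrix.unitaryGroup (Fin d) ℂ =>
      applyB (U : Matrix (Fin d) (Fin d) ℂ)) :=
    (continuous_uncurry_applyB.comp (continuous_subtype_val.prodMap continuous_id)).measurable
  simp_rw [← hMT]
  exact (integral_integral_comp_eq_of_map_eq hmeas (fun U => hD U U.2) hint).symm

/-- Theorem `theorem-424241`, optimal average-case local tester. -/
theorem stmt_3 (d N : ℕ) (hd : 1 ≤ d) (hN : 1 ≤ N)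
    (T : Matrix (Fin N → Fin d × Fin d) (Fin N → Fin d × Fin d) ℂ)
    (hT : IsTester T) :
    ∃ M : Matrix (Fin N → Fin d) (Fin N → Fin d) ℂ,
      IsTester M ∧
      ∀ D : Measure (Fin d × Fin d → ℂ), IsProbabilityMeasure D →
        (∀ᵐ ψ ∂D, IsUnitVec ψ) →
        (∀ U ∈ Matrix.unitaryGroup (Fin d) ℂ, D.map (applyB U) = D) →
        ∫ ψ, acc T (outer ψ) ∂D = ∫ ψ, acc (localA M) (outer ψ) ∂D := by
  obtain ⟨M, hM, hMT⟩ := stmt_3_general hT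
  exact ⟨M, hM, fun D _ hunit =>
    hMT D inferInstance (integrable_of_ae_isUnitVec hunit (continuous_acc_outer T))⟩

end PaperStmt
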